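/- Let Θ ⊆ ℝ^n be a nearly convex set, and let F : ℝ^n ⇒ ℝ^p and G : ℝ^n ⇒ ℝ^q be nearly convex set-valued mappings with ri(dom F) ∩ ri(dom G) ∩ ri Θ ≠ ∅. Define Ψ : ℝ^n × ℝ^n × ℝ^q ⇒ ℝ^p by Ψ(x, u, y) = F(x + u) if x ∈ Θ and y ∈ G(x), and Ψ(x, u, y) = ∅ otherwise. Then Ψ is a nearly convex set-valued mapping. -/

import Mathlib

open Set Metric

noncomputable section

/-- A set is *nearly convex* if it lies between a convex set and its closure. -/
def NearlyConvex {E : Type*} [NormedAddCommGroup E] [NormedSpace ℝ E] (s : Set E) : Prop :=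
  ∃ C : Set E, Convex ℝ C ∧ C ⊆ s ∧ s ⊆ closure C

/-- The *relative interior* of a set: points `a ∈ s` admitting `δ > 0` with
`B(a,δ) ∩ aff s ⊆ s`. -/
def ri {E : Type*} [NormedAddCommGroup E] [NormedSpace ℝ E] (s : Set E) : Set E :=
  {a | a ∈ s ∧ ∃ δ > 0, Metric.ball a δ ∩ (affineSpan ℝ s : Set E) ⊆ s}

/-- The graph of a set-valued mapping. -/
def gph {E P : Type*} (F : E → Set P) : Set (E × P) := {q | q.2 ∈ F q.1}

/-- The domain of a set-valued mapping. -/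
def domSV {E P : Type*} (F : E → Set P) : Set E := {x | (F x).Nonempty}

/-!
The relative interior of a nearly convex set is convex and dense in it, because both it and the
affine hull agree with those of any convex witness. Hence near convexity passes to the preimage
under an affine map as soon as the map hits the relative interior: the open segment from such a
point to any point of the preimage is mapped into the relative interior.

The graph of the composite is the preimage of `Θ × gph G × gph F` under the linear map
`((x, u, y), z) ↦ (x, (x, y), (x + u, z))`. A point `x ∈ ri (dom G)` lifts to some
`(x, y) ∈ ri (gph G)`, and since `u` is free, `(x + u, z)` can be any point of `ri (gph F)`.
-/

open scoped Topology

section RelativeInterior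

variable {E V : Type*} [NormedAddCommGroup E] [NormedSpace ℝ E]
  [NormedAddCommGroup V] [NormedSpace ℝ V]

theorem mem_ri_iff_mem_nhdsWithin {s : Set E} {x : E} :
    x ∈ ri s ↔ x ∈ s ∧ s ∈ 𝓝[affineSpan ℝ s] x := by
  simp only [ri, mem_ofPred_eq, Metric.mem_nhdsWithin_iff]

theorem ri_subset {s : Set E} : ri s ⊆ s := fun _ hx => hx.1

theorem ri_eq_intrinsicInterior (s : Set E) : ri s = intrinsicInterior ℝ s := by
  ext x
  rw [mem_ri_iff_mem_nhdsWithin, mem_intrinsicInterior]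
  constructor
  · rintro ⟨hxs, hx⟩
    have hxA : x ∈ affineSpan ℝ s := subset_affineSpan ℝ s hxs
    exact ⟨⟨x, hxA⟩, mem_interior_iff_mem_nhds.2 (preimage_coe_mem_nhds_subtype.2 hx), rfl⟩
  · rintro ⟨y, hy, rfl⟩
    exact ⟨interior_subset (s := ((↑) : affineSpan ℝ s → E) ⁻¹' s) hy,
      preimage_coe_mem_nhds_subtype.1 (mem_interior_iff_mem_nhds.1 hy)⟩

theorem ri_prod (s : Set E) (t : Set V) : ri (s ×ˢ t) = ri s ×ˢ ri t := by
  simp only [ri_eq_intrinsicInterior, intrinsicInterior_prod_eq]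

theorem exists_mem_openSegment_of_mem_ri {s : Set E} {c x : E} (hx : x ∈ ri s)
    (hc : c ∈ affineSpan ℝ s) : ∃ y ∈ s, x ∈ openSegment ℝ c y := by
  obtain ⟨hxs, hx⟩ := mem_ri_iff_mem_nhdsWithin.1 hx
  have hline : Filter.Tendsto (AffineMap.lineMap c x) (𝓝 (1 : ℝ)) (𝓝[affineSpan ℝ s] x) := by
    refine tendsto_nhdsWithin_iff.2 ⟨?_, .of_forall fun r =>
      AffineMap.lineMap_mem r hc (subset_affineSpan ℝ s hxs)⟩
    simpa only [AffineMap.lineMap_apply_one] using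
      (AffineMap.lineMap_continuous (p := c) (q := x)).tendsto (1 : ℝ)
  obtain ⟨r, hrs, hr⟩ : ∃ r : ℝ, AffineMap.lineMap c x r ∈ s ∧ 1 < r :=
    (((hline.eventually hx).filter_mono nhdsWithin_le_nhds).and
      (self_mem_nhdsWithin : Ioi (1 : ℝ) ∈ 𝓝[>] 1)).exists
  refine ⟨AffineMap.lineMap c x r, hrs, ?_⟩
  have hr₀ : 0 < r := zero_lt_one.trans hr
  have hx_eq : AffineMap.lineMap c (AffineMap.lineMap c x r) r⁻¹ = x := by
    rw [AffineMap.lineMap_lineMap_right, inv_mul_cancel₀ hr₀.ne', AffineMap.lineMap_apply_one]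
  simpa only [hx_eq] using
    lineMap_mem_openSegment ℝ c (AffineMap.lineMap c x r) ⟨inv_pos.2 hr₀, inv_lt_one_of_one_lt₀ hr⟩

end RelativeInterior

section Convex

variable {E : Type*} [NormedAddCommGroup E] [NormedSpace ℝ E] [FiniteDimensional ℝ E]

theorem closure_subset_affineSpan (s : Set E) : closure s ⊆ affineSpan ℝ s :=
  closure_minimal (subset_affineSpan ℝ s) (AffineSubspace.closed_of_finiteDimensional _)

theorem affineSpan_eq_of_subset_of_subset_closure {s t : Set E} (hst : s ⊆ t)
    (hts : t ⊆ closure s) : affineSpan ℝ t = affineSpan ℝ s :=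
  (affineSpan_le.2 (hts.trans (closure_subset_affineSpan s))).antisymm (affineSpan_mono ℝ hst)

theorem openSegment_subset_ri_of_convex {C : Set E} (hC : Convex ℝ C) {x y : E}
    (hx : x ∈ closure C) (hy : y ∈ ri C) : openSegment ℝ x y ⊆ ri C := by
  obtain ⟨hyC, hy⟩ := mem_ri_iff_mem_nhdsWithin.1 hy
  rw [openSegment_eq_image_lineMap]
  rintro _ ⟨t, ⟨ht₀, ht₁⟩, rfl⟩
  set z := AffineMap.lineMap x y t
  have hzA : z ∈ affineSpan ℝ C :=
    AffineMap.lineMap_mem t (closure_subset_affineSpan C hx) (subset_affineSpan ℝ C hyC)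
  -- Nearby points `w` of the affine hull lie on a segment from some `c ∈ C` close to `x` to the
  -- point `lineMap c w t⁻¹`, which is close to `lineMap x z t⁻¹ = y`.
  have hextend : Filter.Tendsto (fun q : E × E => AffineMap.lineMap q.2 q.1 t⁻¹)
      (𝓝[affineSpan ℝ C] z ×ˢ 𝓝[C] x) (𝓝[affineSpan ℝ C] y) := by
    have hy_eq : AffineMap.lineMap x z t⁻¹ = y := by
      rw [AffineMap.lineMap_lineMap_right, inv_mul_cancel₀ ht₀.ne', AffineMap.lineMap_apply_one]
    rw [← hy_eq, ← nhdsWithin_prod_eq]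
    refine tendsto_nhdsWithin_iff.2 ⟨?_, ?_⟩
    · exact (Continuous.lineMap continuous_snd continuous_fst continuous_const).continuousWithinAt
    · filter_upwards [self_mem_nhdsWithin] with q hq
      exact AffineMap.lineMap_mem _ (subset_affineSpan ℝ C hq.2) hq.1
  have hC_nhds : C ∈ 𝓝[affineSpan ℝ C] z := by
    have : (𝓝[C] x).NeBot := mem_closure_iff_nhdsWithin_neBot.1 hx
    filter_upwards [(hextend.eventually hy).curry] with w hw
    obtain ⟨c, hcw, hc⟩ := (hw.and self_mem_nhdsWithin).exists
    have hw_eq : AffineMap.lineMap c (AffineMap.lineMap c w t⁻¹) t = w := by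
      rw [AffineMap.lineMap_lineMap_right, mul_inv_cancel₀ ht₀.ne', AffineMap.lineMap_apply_one]
    exact hw_eq ▸ hC.lineMap_mem hc hcw ⟨ht₀.le, ht₁.le⟩
  exact mem_ri_iff_mem_nhdsWithin.2 ⟨mem_of_mem_nhdsWithin hzA hC_nhds, hC_nhds⟩

theorem ri_nonempty_of_convex {C : Set E} (hC : Convex ℝ C) (hne : C.Nonempty) :
    (ri C).Nonempty :=
  ri_eq_intrinsicInterior C ▸ hne.intrinsicInterior hC

theorem ri_eq_ri_of_convex_of_subset_closure {C s : Set E} (hC : Convex ℝ C) (hCs : C ⊆ s)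
    (hsC : s ⊆ closure C) : ri s = ri C := by
  have hspan : affineSpan ℝ s = affineSpan ℝ C :=
    affineSpan_eq_of_subset_of_subset_closure hCs hsC
  refine Subset.antisymm (fun x hx => ?_) (fun x hx => ?_)
  · obtain ⟨c, hc⟩ := ri_nonempty_of_convex hC (closure_nonempty_iff.1 ⟨x, hsC (ri_subset hx)⟩)
    obtain ⟨y, hys, hxy⟩ :=
      exists_mem_openSegment_of_mem_ri hx (subset_affineSpan ℝ s (hCs (ri_subset hc)))
    rw [openSegment_symm] at hxy
    exact openSegment_subset_ri_of_convex hC (hsC hys) hc hxy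
  · obtain ⟨hxC, hx⟩ := mem_ri_iff_mem_nhdsWithin.1 hx
    exact mem_ri_iff_mem_nhdsWithin.2 ⟨hCs hxC, hspan ▸ Filter.mem_of_superset hx hCs⟩

end Convex

namespace NearlyConvex

variable {E V : Type*} [NormedAddCommGroup E] [NormedSpace ℝ E]
  [NormedAddCommGroup V] [NormedSpace ℝ V]

protected theorem empty : NearlyConvex (∅ : Set E) :=
  ⟨∅, convex_empty, Subset.rfl, empty_subset _⟩

protected theorem prod {s : Set E} {t : Set V} (hs : NearlyConvex s) (ht : NearlyConvex t) :
    NearlyConvex (s ×ˢ t) := by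
  obtain ⟨C, hC, hCs, hsC⟩ := hs
  obtain ⟨D, hD, hDt, htD⟩ := ht
  refine ⟨C ×ˢ D, hC.prod hD, prod_mono hCs hDt, ?_⟩
  rw [closure_prod_eq]
  exact prod_mono hsC htD

variable [FiniteDimensional ℝ E] {s : Set E}

theorem ri_nonempty (hs : NearlyConvex s) (hne : s.Nonempty) : (ri s).Nonempty := by
  obtain ⟨C, hC, hCs, hsC⟩ := hs
  rw [ri_eq_ri_of_convex_of_subset_closure hC hCs hsC]
  exact ri_nonempty_of_convex hC (closure_nonempty_iff.1 (hne.mono hsC))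

theorem openSegment_subset_ri (hs : NearlyConvex s) {x y : E} (hx : x ∈ closure s)
    (hy : y ∈ ri s) : openSegment ℝ x y ⊆ ri s := by
  obtain ⟨C, hC, hCs, hsC⟩ := hs
  rw [ri_eq_ri_of_convex_of_subset_closure hC hCs hsC] at hy ⊢
  exact openSegment_subset_ri_of_convex hC (closure_minimal hsC isClosed_closure hx) hy

theorem convex_ri (hs : NearlyConvex s) : Convex ℝ (ri s) :=
  convex_iff_openSegment_subset.2 fun _ hx _ hy =>
    hs.openSegment_subset_ri (subset_closure (ri_subset hx)) hy

theorem ri_image_subset (hs : NearlyConvex s) (f : E →ᵃ[ℝ] V) : ri (f '' s) ⊆ f '' ri s := by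
  intro x hx
  obtain ⟨c, hc⟩ := hs.ri_nonempty (image_nonempty.1 ⟨x, ri_subset hx⟩)
  have hfc : f c ∈ affineSpan ℝ (f '' s) :=
    subset_affineSpan ℝ _ (mem_image_of_mem f (ri_subset hc))
  obtain ⟨_, ⟨b, hb, rfl⟩, hxb⟩ := exists_mem_openSegment_of_mem_ri hx hfc
  rw [openSegment_symm, ← image_openSegment] at hxb
  exact image_mono (hs.openSegment_subset_ri (subset_closure hb) hc) hxb

protected theorem preimage (hs : NearlyConvex s) (f : V →ᵃ[ℝ] E) (hf : (f ⁻¹' ri s).Nonempty) :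
    NearlyConvex (f ⁻¹' s) := by
  obtain ⟨x₀, hx₀⟩ := hf
  refine ⟨f ⁻¹' ri s, hs.convex_ri.affine_preimage f, preimage_mono ri_subset, fun x hx => ?_⟩
  have hseg : openSegment ℝ x x₀ ⊆ f ⁻¹' ri s := by
    rw [← image_subset_iff, image_openSegment]
    exact hs.openSegment_subset_ri (subset_closure hx) hx₀
  exact closure_mono hseg (segment_subset_closure_openSegment (left_mem_segment ℝ x x₀))

end NearlyConvex

section SetValued

theorem domSV_eq_fst_image_gph {X Y : Type*} (F : X → Set Y) : domSV F = Prod.fst '' gph F := by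
  ext x
  constructor
  · rintro ⟨y, hy⟩
    exact ⟨(x, y), hy, rfl⟩
  · rintro ⟨⟨_, y⟩, hy, rfl⟩
    exact ⟨y, hy⟩

/-- The linear map `((x, u, y), z) ↦ (x, (x, y), (x + u, z))`, under which the graph of
`(x, u, y) ↦ {z ∈ F (x + u) | x ∈ Θ, y ∈ G x}` is the preimage of `Θ ×ˢ gph G ×ˢ gph F`. -/
def shiftLinearMap (E P Q : Type*) [AddCommGroup E] [Module ℝ E] [AddCommGroup P] [Module ℝ P]
    [AddCommGroup Q] [Module ℝ Q] : (E × E × Q) × P →ₗ[ℝ] E × (E × Q) × (E × P) where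
  toFun t := (t.1.1, (t.1.1, t.1.2.2), (t.1.1 + t.1.2.1, t.2))
  map_add' s t := by
    simp only [Prod.fst_add, Prod.snd_add, Prod.mk_add_mk, add_add_add_comm]
  map_smul' r t := by
    simp only [Prod.smul_fst, Prod.smul_snd, Prod.smul_mk, smul_add, RingHom.id_apply]

variable {E P Q : Type*} [NormedAddCommGroup E] [NormedSpace ℝ E] [FiniteDimensional ℝ E]
  [NormedAddCommGroup P] [NormedSpace ℝ P] [FiniteDimensional ℝ P]
  [NormedAddCommGroup Q] [NormedSpace ℝ Q] [FiniteDimensional ℝ Q]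

theorem exists_mem_ri_gph_of_mem_ri_domSV {G : E → Set Q} (hG : NearlyConvex (gph G)) {x : E}
    (hx : x ∈ ri (domSV G)) : ∃ y, (x, y) ∈ ri (gph G) := by
  rw [domSV_eq_fst_image_gph] at hx
  obtain ⟨⟨_, y⟩, hy, rfl⟩ := hG.ri_image_subset (LinearMap.fst ℝ E Q).toAffineMap hx
  exact ⟨y, hy⟩

theorem composite_shifted_nearlyConvex_general {Θ : Set E} {F : E → Set P} {G : E → Set Q}
    (hΘ : NearlyConvex Θ) (hF : NearlyConvex (gph F)) (hG : NearlyConvex (gph G))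
    (hqc : (ri (domSV G) ∩ ri Θ).Nonempty) :
    NearlyConvex (gph fun t : E × E × Q =>
      {z | t.1 ∈ Θ ∧ t.2.2 ∈ G t.1 ∧ z ∈ F (t.1 + t.2.1)}) := by
  change NearlyConvex ((shiftLinearMap E P Q).toAffineMap ⁻¹' (Θ ×ˢ gph G ×ˢ gph F))
  obtain hF_empty | hF_nonempty := (gph F).eq_empty_or_nonempty
  · simpa only [hF_empty, prod_empty, preimage_empty] using NearlyConvex.empty
  obtain ⟨x, hxG, hxΘ⟩ := hqc
  obtain ⟨y, hxy⟩ := exists_mem_ri_gph_of_mem_ri_domSV hG hxG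
  obtain ⟨⟨w, z⟩, hwz⟩ := hF.ri_nonempty hF_nonempty
  refine (hΘ.prod (hG.prod hF)).preimage _ ⟨((x, w - x, y), z), ?_⟩
  rw [mem_preimage, ri_prod, ri_prod]
  refine ⟨hxΘ, hxy, ?_⟩
  change (x + (w - x), z) ∈ ri (gph F)
  rwa [add_sub_cancel]

end SetValued

theorem composite_shifted_nearlyConvex (n p q : ℕ)
    (Θ : Set (EuclideanSpace ℝ (Fin n)))
    (F : EuclideanSpace ℝ (Fin n) → Set (EuclideanSpace ℝ (Fin p)))
    (G : EuclideanSpace ℝ (Fin n) → Set (EuclideanSpace ℝ (Fin q)))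
    (hΘ : NearlyConvex Θ) (hF : NearlyConvex (gph F)) (hG : NearlyConvex (gph G))
    (hqc : (ri (domSV F) ∩ ri (domSV G) ∩ ri Θ).Nonempty) :
    NearlyConvex (gph (fun t : EuclideanSpace ℝ (Fin n) × EuclideanSpace ℝ (Fin n) ×
        EuclideanSpace ℝ (Fin q) =>
      {z | t.1 ∈ Θ ∧ t.2.2 ∈ G t.1 ∧ z ∈ F (t.1 + t.2.1)})) := by
  exact composite_shifted_nearlyConvex_general hΘ hF hG
    (hqc.mono (inter_subset_inter_left _ inter_subset_right))
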